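/- Let K be a cone in a Banach space X, y ∈ X, and let D be an open bounded subset of X with y ∈ D. Suppose F : cl(D ∩ K_y) → K_y is a compact map with no fixed point on ∂(D ∩ K_y), and suppose there exists e ∈ K \ {0} such that x ≠ F(x) + σe for all x ∈ ∂(D ∩ K_y) and all σ > 0. Then the fixed point index i_{K_y}(F, D ∩ K_y) = 0. -/

import Mathlib

open Set

/-- An abstract fixed point index for compact maps on a retract `C` of a Banach
space `X`, satisfying homotopy invariance, normalization and the solution
property. -/
structure FPIndex (X : Type*) [NormedAddCommGroup X] [NormedSpace ℝ X]
    (C : Set X) where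
  ind : (X → X) → Set X → ℤ
  homotopy_invariance : ∀ (H : ℝ → X → X) (D : Set X), IsOpen D →
    Bornology.IsBounded D →
    ContinuousOn (fun p : ℝ × X => H p.1 p.2) (Icc (0:ℝ) 1 ×ˢ closure (D ∩ C)) →
    IsCompact (closure ((fun p : ℝ × X => H p.1 p.2) ''
      (Icc (0:ℝ) 1 ×ˢ closure (D ∩ C)))) →
    (∀ t ∈ Icc (0:ℝ) 1, ∀ x ∈ closure (D ∩ C), H t x ∈ C) →
    (∀ t ∈ Icc (0:ℝ) 1, ∀ x ∈ (closure (D ∩ C) ∩ C) \ (D ∩ C), H t x ≠ x) →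
    ind (H 0) D = ind (H 1) D
  normalization : ∀ (D : Set X) (z : X), IsOpen D → z ∈ D ∩ C →
    ind (fun _ => z) D = 1
  solution : ∀ (F : X → X) (D : Set X), ind F D ≠ 0 → ∃ x ∈ D ∩ C, F x = x

/-- Lemma 2.1(1): if there is `e ∈ K \ {0}` with `x ≠ F x + σ e` on the relative
boundary of `D ∩ K_y`, then the fixed point index of `F` on `D ∩ K_y` is `0`. -/
theorem index_zero_on_translate_cone
    {X : Type*} [NormedAddCommGroup X] [NormedSpace ℝ X] [CompleteSpace X]
    (K : Set X) (hK_closed : IsClosed K) (hK_convex : Convex ℝ K)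
    (hK_scalar : ∀ x ∈ K, ∀ l : ℝ, 0 ≤ l → l • x ∈ K)
    (hK_pointed : K ∩ (-K) = {0})
    (y : X) (Ky : Set X) (hKy : Ky = (fun x => y + x) '' K)
    (D : Set X) (hD_open : IsOpen D) (hD_bdd : Bornology.IsBounded D)
    (hyD : y ∈ D)
    (F : X → X) (hF_cont : ContinuousOn F (closure (D ∩ Ky)))
    (hF_maps : ∀ x ∈ closure (D ∩ Ky), F x ∈ Ky)
    (hF_compact : IsCompact (closure (F '' closure (D ∩ Ky))))
    (hF_nofix : ∀ x ∈ (closure (D ∩ Ky) ∩ Ky) \ (D ∩ Ky), F x ≠ x)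
    (e : X) (he : e ∈ K) (he0 : e ≠ 0)
    (hno : ∀ x ∈ (closure (D ∩ Ky) ∩ Ky) \ (D ∩ Ky), ∀ σ : ℝ, 0 < σ →
      x ≠ F x + σ • e)
    (I : FPIndex X Ky) :
    I.ind F D = 0 := by
  have hadd : ∀ a ∈ K, ∀ b ∈ K, a + b ∈ K := by
    intro a ha b hb
    have h := hK_convex (hK_scalar a ha 2 (by norm_num)) (hK_scalar b hb 2 (by norm_num))
      (show (0:ℝ) ≤ 1/2 by norm_num) (show (0:ℝ) ≤ 1/2 by norm_num) (by norm_num)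
    simpa [smul_smul] using h
  obtain ⟨A, hA⟩ := hD_bdd.exists_norm_le
  obtain ⟨B, hB⟩ := hF_compact.isBounded.exists_norm_le
  have hen : 0 < ‖e‖ := norm_pos_iff.mpr he0
  obtain ⟨R, hR0, hR⟩ : ∃ R : ℝ, 0 < R ∧ A + B < R * ‖e‖ := by
    refine ⟨(|A + B| + 1) / ‖e‖, by positivity, ?_⟩
    rw [div_mul_cancel₀ _ hen.ne']
    linarith [le_abs_self (A + B)]
  have key := I.homotopy_invariance (fun t x => F x + (t * R) • e) D hD_open hD_bdd ?_ ?_ ?_ ?_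
  · have h0 : (fun x => F x + ((0:ℝ) * R) • e) = F := by
      funext x; simp
    have key' : I.ind F D = I.ind (fun x => F x + ((1:ℝ) * R) • e) D := by
      rw [← key]
      exact congrArg (fun G => I.ind G D) h0.symm
    rw [key']
    by_contra hne
    obtain ⟨x, hx, hfx⟩ := I.solution _ _ hne
    have h1 : ‖x‖ ≤ A := hA x hx.1
    have h2 : ‖F x‖ ≤ B := hB _ (subset_closure ⟨x, subset_closure hx, rfl⟩)
    have h3 : R • e = x - F x := by
      rw [eq_sub_iff_add_eq, add_comm]
      simpa using hfx
    have h4 : R * ‖e‖ = ‖x - F x‖ := by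
      rw [← h3, norm_smul, Real.norm_of_nonneg hR0.le]
    linarith [norm_sub_le x (F x)]
  · refine ContinuousOn.add (hF_cont.comp continuousOn_snd fun p hp => hp.2) ?_
    fun_prop
  · have hc : IsCompact ((fun q : X × ℝ => q.1 + (q.2 * R) • e) ''
        (closure (F '' closure (D ∩ Ky)) ×ˢ Icc (0:ℝ) 1)) :=
      (hF_compact.prod isCompact_Icc).image (by fun_prop)
    refine hc.of_isClosed_subset isClosed_closure (closure_minimal ?_ hc.isClosed)
    rintro _ ⟨p, hp, rfl⟩
    exact ⟨(F p.2, p.1), ⟨subset_closure ⟨p.2, hp.2, rfl⟩, hp.1⟩, rfl⟩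
  · intro t ht x hx
    have h := hF_maps x hx
    rw [hKy] at h ⊢
    obtain ⟨k, hk, hkx⟩ := h
    refine ⟨k + (t * R) • e, hadd _ hk _ (hK_scalar e he _ (mul_nonneg ht.1 hR0.le)), ?_⟩
    simp only at hkx ⊢
    rw [← hkx, add_assoc]
  · intro t ht x hx hfx
    rcases ht.1.eq_or_lt with h | h
    · subst h
      exact hF_nofix x hx (by simpa using hfx)
    · exact hno x hx (t * R) (mul_pos h hR0) hfx.symm
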